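/- arXiv:2401.12510 — 5 statements merged into one kernel-verified Lean document; each statement's English description precedes it below -/
import Mathlib

section
/- Let R be a centrally essential ring and let I be a two-sided ideal of R which is semiprime as a ring. Then I is contained in the center C(R) of R; in particular, I is a commutative (hence centrally essential) ring. -/
/-- A unital ring `R` is centrally essential if for every nonzero `a ∈ R` there exists a
central element `c` such that `a * c` is a nonzero central element. -/
def IsCentrallyEssential (R : Type*) [Ring R] : Prop :=
  ∀ a : R, a ≠ 0 → ∃ c ∈ Set.center R, a * c ∈ Set.center R ∧ a * c ≠ 0

/-!
For `a : R` let `K` be the set of central `c` with `a * c` central. If `R` is centrally essential,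
`K` is large: a central `z` in an ideal without nonzero central elements of square zero vanishes as
soon as `z * K = 0`. A commutator `⁅r, a⁆` kills `K`, hence so does every multiple `⁅r, a⁆ * e`.
If `a` lies in the ideal, all central multiples therefore vanish, so `⁅r, a⁆ = 0` because `R` is
centrally essential.
-/

/-- The additive subgroup `I` is semiprime as a ring: it has no nonzero ideal `N` with `N * N = 0`.
Here `N` is an ideal of `I` and need not be an ideal of the ambient ring. -/
def IsSemiprimeAsRing {R : Type*} [NonUnitalNonAssocRing R] (I : AddSubgroup R) : Prop :=
  ∀ N : AddSubgroup R, (N : Set R) ⊆ (I : Set R) →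
    (∀ x ∈ I, ∀ n ∈ N, x * n ∈ N) → (∀ x ∈ I, ∀ n ∈ N, n * x ∈ N) →
    (∀ m ∈ N, ∀ n ∈ N, m * n = 0) → N = ⊥

/-- The set `I` is centrally reduced if it contains no nonzero element of square zero that is
central in the ambient ring. For ideals it is a weak form of being semiprime as a ring. -/
def IsCentrallyReduced {R : Type*} [NonUnitalNonAssocRing R] (I : Set R) : Prop :=
  ∀ z ∈ I, z ∈ Set.center R → z * z = 0 → z = 0

theorem lie_mul_eq_zero_of_mem_center {R : Type*} [NonUnitalRing R] {a c : R}
    (hc : c ∈ Set.center R) (hac : a * c ∈ Set.center R) (r : R) : ⁅r, a⁆ * c = 0 := by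
  have hrac : r * (a * c) = a * (r * c) := by
    rw [Semigroup.mem_center_iff.mp hac r, mul_assoc, Semigroup.mem_center_iff.mp hc r]
  rw [Ring.lie_def, sub_mul, mul_assoc, mul_assoc, hrac, sub_self]

section Ring

variable {R : Type*} [Ring R]

theorem IsSemiprimeAsRing.isCentrallyReduced {I : AddSubgroup R} (hI : IsSemiprimeAsRing I)
    (hright : ∀ x ∈ I, ∀ r : R, x * r ∈ I) : IsCentrallyReduced (I : Set R) := by
  intro z hzI hz hzz
  have hcomm (r : R) : r * z = z * r := Semigroup.mem_center_iff.mp hz r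
  have hbot : (AddMonoidHom.mulLeft z).range = ⊥ := by
    apply hI
    · rintro _ ⟨r, rfl⟩
      exact hright z hzI r
    · rintro x - _ ⟨r, rfl⟩
      exact ⟨x * r, by simp only [AddMonoidHom.coe_mulLeft, ← mul_assoc, hcomm]⟩
    · rintro x - _ ⟨r, rfl⟩
      exact ⟨r * x, (mul_assoc z r x).symm⟩
    · rintro _ ⟨r, rfl⟩ _ ⟨s, rfl⟩
      calc z * r * (z * s) = z * (r * z) * s := by simp only [mul_assoc]
        _ = z * z * r * s := by rw [hcomm, mul_assoc z z r]
        _ = 0 := by rw [hzz, zero_mul, zero_mul]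
  have hmem : z ∈ (AddMonoidHom.mulLeft z).range := ⟨1, mul_one z⟩
  rwa [hbot, AddSubgroup.mem_bot] at hmem

namespace IsCentrallyEssential

theorem eq_zero_of_forall_mul_eq_zero (hR : IsCentrallyEssential R) {I : Set R}
    (hI : IsCentrallyReduced I) (hright : ∀ x ∈ I, ∀ r : R, x * r ∈ I) {a z : R}
    (hzI : z ∈ I) (hz : z ∈ Set.center R)
    (hann : ∀ c ∈ Set.center R, a * c ∈ Set.center R → z * c = 0) : z = 0 := by
  have haz : a * z = 0 := by
    by_contra hne
    obtain ⟨c, hc, hazc, hazc_ne⟩ := hR (a * z) hne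
    rw [mul_assoc] at hazc hazc_ne
    have hzc : z * c ∈ Set.center R := Set.mul_mem_center hz hc
    have hzc_sq : z * c * (z * c) = 0 := by
      rw [mul_assoc, Semigroup.mem_center_iff.mp hzc c, ← mul_assoc, hann (z * c) hzc hazc,
        zero_mul]
    exact hazc_ne (by rw [hI (z * c) (hright z hzI c) hzc hzc_sq, mul_zero])
  exact hI z hzI hz (hann z hz (haz ▸ Set.zero_mem_center))

theorem subset_center (hR : IsCentrallyEssential R) {I : AddSubgroup R}
    (htwoSided : ∀ x ∈ I, ∀ r : R, x * r ∈ I ∧ r * x ∈ I)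
    (hI : IsCentrallyReduced (I : Set R)) : (I : Set R) ⊆ Set.center R := by
  intro a ha
  have hright : ∀ x ∈ I, ∀ r : R, x * r ∈ I := fun x hx r => (htwoSided x hx r).1
  have hlie (r : R) : ⁅r, a⁆ = 0 := by
    by_contra hne
    obtain ⟨e, -, hcentral, hmul_ne⟩ := hR ⁅r, a⁆ hne
    have hmem : ⁅r, a⁆ * e ∈ I :=
      hright _ (I.sub_mem (htwoSided a ha r).2 (htwoSided a ha r).1) e
    refine hmul_ne (hR.eq_zero_of_forall_mul_eq_zero (a := a) hI hright hmem hcentral ?_)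
    intro c hc hac
    rw [mul_assoc, Semigroup.mem_center_iff.mp hc e, ← mul_assoc,
      lie_mul_eq_zero_of_mem_center hc hac, zero_mul]
  exact Semigroup.mem_center_iff.mpr fun r => sub_eq_zero.mp (hlie r)

end IsCentrallyEssential

end Ring

/-- Let `R` be a centrally essential ring and let `I` be a two-sided ideal of `R` which is
semiprime as a ring. Then `I ⊆ C(R)`; in particular, `I` is a commutative ring. -/
theorem stmt1 (R : Type*) [Ring R] (hR : IsCentrallyEssential R)
    (I : AddSubgroup R) (hItwoSided : ∀ x ∈ I, ∀ r : R, x * r ∈ I ∧ r * x ∈ I)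
    (hIsemiprime : ∀ N : AddSubgroup R, (N : Set R) ⊆ (I : Set R) →
      (∀ x ∈ I, ∀ n ∈ N, x * n ∈ N) → (∀ x ∈ I, ∀ n ∈ N, n * x ∈ N) →
      (∀ m ∈ N, ∀ n ∈ N, m * n = 0) → N = ⊥) :
    (I : Set R) ⊆ Set.center R ∧ (∀ x ∈ I, ∀ y ∈ I, x * y = y * x) := by
  have hsemiprime : IsSemiprimeAsRing I := hIsemiprime
  have hreduced : IsCentrallyReduced (I : Set R) :=
    hsemiprime.isCentrallyReduced fun x hx r => (hItwoSided x hx r).1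
  have hcenter : (I : Set R) ⊆ Set.center R := hR.subset_center hItwoSided hreduced
  exact ⟨hcenter, fun x _ y hy => Semigroup.mem_center_iff.mp (hcenter hy) x⟩
end

section
/- Let R be a centrally essential ring and let J be a right ideal of R which is semiprime as a ring. Then J is a reduced and commutative right ideal, i.e., J contains no nonzero nilpotent elements and a*b = b*a for all a, b ∈ J. -/
/-- The subring `J` is semiprime as a ring: an ideal of `J` whose square is zero vanishes. The
ideals are encoded as additive subgroups of the ambient ring that are contained in `J`. -/
def IsSemiprimeSubring {R : Type*} [NonUnitalRing R] (J : NonUnitalSubring R) : Prop :=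
  ∀ N : AddSubgroup R, (N : Set R) ⊆ (J : Set R) →
    (∀ x ∈ J, ∀ n ∈ N, x * n ∈ N) → (∀ x ∈ J, ∀ n ∈ N, n * x ∈ N) →
    (∀ m ∈ N, ∀ n ∈ N, m * n = 0) → N = ⊥

theorem IsSemiprimeSubring.eq_zero_of_commute_of_mul_self_eq_zero {R : Type*} [NonUnitalRing R]
    {J : NonUnitalSubring R} (hJ : IsSemiprimeSubring J) {d : R} (hdJ : d ∈ J)
    (hd : ∀ x ∈ J, Commute d x) (hdd : d * d = 0) : d = 0 := by
  let N : AddSubgroup R :=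
    { carrier := {n | n ∈ J ∧ d * n = 0 ∧ ∀ x ∈ J, d * x = 0 → n * x = 0}
      zero_mem' := ⟨J.zero_mem, mul_zero d, fun x _ _ ↦ zero_mul x⟩
      add_mem' := fun ⟨hmJ, hdm, hm⟩ ⟨hnJ, hdn, hn⟩ ↦
        ⟨J.add_mem hmJ hnJ, by rw [mul_add, hdm, hdn, add_zero],
          fun x hx hdx ↦ by rw [add_mul, hm x hx hdx, hn x hx hdx, add_zero]⟩
      neg_mem' := fun ⟨hnJ, hdn, hn⟩ ↦
        ⟨J.neg_mem hnJ, by rw [mul_neg, hdn, neg_zero],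
          fun x hx hdx ↦ by rw [neg_mul, hn x hx hdx, neg_zero]⟩ }
  have hdN : d ∈ N := ⟨hdJ, hdd, fun _ _ hdx ↦ hdx⟩
  have hN : N = ⊥ := by
    refine hJ N (fun n hn ↦ hn.1) ?_ ?_ fun m hm n hn ↦ hm.2.2 n hn.1 hn.2.1
    · rintro x hx n ⟨hnJ, hdn, hn⟩
      refine ⟨J.mul_mem hx hnJ, ?_, fun y hy hdy ↦ ?_⟩
      · rw [(hd x hx).left_comm, hdn, mul_zero]
      · rw [mul_assoc, hn y hy hdy, mul_zero]
    · rintro x hx n ⟨hnJ, hdn, hn⟩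
      refine ⟨J.mul_mem hnJ hx, ?_, fun y hy hdy ↦ ?_⟩
      · rw [← mul_assoc, hdn, zero_mul]
      · rw [mul_assoc]
        exact hn _ (J.mul_mem hx hy) (by rw [(hd x hx).left_comm, hdy, mul_zero])
  rwa [hN, AddSubgroup.mem_bot] at hdN

theorem eq_zero_of_isNilpotent_of_mem_subsemigroup {M : Type*} [MonoidWithZero M]
    {S : Subsemigroup M} (hS : ∀ a ∈ S, a * a = 0 → a = 0) {a : M} (ha : a ∈ S)
    (hnil : IsNilpotent a) : a = 0 := by
  obtain ⟨n, hn⟩ := hnil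
  replace hn : a ^ 2 ^ n = 0 := pow_eq_zero_of_le Nat.lt_two_pow_self.le hn
  induction n generalizing a with
  | zero => simpa only [pow_zero, pow_one] using hn
  | succ n ih =>
    refine hS a ha (ih (S.mul_mem ha ha) ?_)
    rwa [← pow_two, ← pow_mul, ← pow_succ']

theorem commutator_mul_eq_zero_of_commute {R : Type*} [NonUnitalRing R] {a b z : R}
    (hz : Commute b z) (haz : Commute b (a * z)) : (a * b - b * a) * z = 0 := by
  rw [sub_mul, sub_eq_zero, mul_assoc a, hz.eq, ← mul_assoc, ← haz.eq, mul_assoc]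

/-- The non-unital subalgebra over the center whose underlying additive group is a right ideal. -/
def nonUnitalSubalgebraOfRightIdeal {R : Type*} [Ring R] (J : AddSubgroup R)
    (hJ : ∀ x ∈ J, ∀ r : R, x * r ∈ J) : NonUnitalSubalgebra (Subring.center R) R where
  carrier := J
  add_mem' := J.add_mem
  zero_mem' := J.zero_mem
  mul_mem' := fun {x y} hx _ ↦ hJ x hx y
  smul_mem' := fun c x hx ↦ by
    rw [Subring.smul_def, smul_eq_mul, ← Subring.mem_center_iff.1 c.2 x]
    exact hJ x hx c

theorem mul_mem_of_mem_center {R : Type*} [Ring R] {J : NonUnitalSubalgebra (Subring.center R) R}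
    {x c : R} (hx : x ∈ J) (hc : c ∈ Set.center R) : x * c ∈ J := by
  rw [← ((Set.mem_center_iff.1 hc).comm x).eq]
  exact J.smul_mem (⟨c, hc⟩ : Subring.center R) hx

namespace IsCentrallyEssential

variable {R : Type*} [Ring R]

theorem exists_mul_ne_zero_and_mul_mem_center (hR : IsCentrallyEssential R) (a : R) {d : R}
    (hd : d ≠ 0) : ∃ z ∈ Set.center R, d * z ≠ 0 ∧ a * (d * z) ∈ Set.center R := by
  by_cases had : a * d = 0
  · exact ⟨1, Set.one_mem_center, by rwa [mul_one],
      by rw [mul_one, had]; exact Set.zero_mem_center⟩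
  · obtain ⟨z, hz, hadz, hadz0⟩ := hR (a * d) had
    rw [mul_assoc] at hadz hadz0
    exact ⟨z, hz, right_ne_zero_of_mul hadz0, hadz⟩

variable {J : NonUnitalSubalgebra (Subring.center R) R}

theorem eq_zero_of_mul_self_eq_zero (hR : IsCentrallyEssential R)
    (hJ : IsSemiprimeSubring J.toNonUnitalSubring) {a : R} (ha : a ∈ J) (haa : a * a = 0) :
    a = 0 := by
  by_contra ha0
  obtain ⟨c, hc, hac, hac0⟩ := hR a ha0
  have hca : Commute c a := (Set.mem_center_iff.1 hc).comm a
  refine hac0 (hJ.eq_zero_of_commute_of_mul_self_eq_zero (mul_mem_of_mem_center ha hc)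
    (fun x _ ↦ (Set.mem_center_iff.1 hac).comm x) ?_)
  rw [hca.mul_mul_mul_comm, haa, zero_mul]

theorem mul_comm_of_mem (hR : IsCentrallyEssential R)
    (hJ : IsSemiprimeSubring J.toNonUnitalSubring) {a b : R} (ha : a ∈ J) (hb : b ∈ J) :
    a * b = b * a := by
  by_contra hab
  obtain ⟨c, hc, hd, hd0⟩ := hR (a * b - b * a) (sub_ne_zero.2 hab)
  have hdJ : (a * b - b * a) * c ∈ J :=
    mul_mem_of_mem_center (J.sub_mem (J.mul_mem ha hb) (J.mul_mem hb ha)) hc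
  obtain ⟨z, hz, hdz0, hadz⟩ := hR.exists_mul_ne_zero_and_mul_mem_center a hd0
  set d := (a * b - b * a) * c with hd_def
  have hdz : d * z ∈ Set.center R := Set.mul_mem_center hd hz
  have hcomm : (a * b - b * a) * (d * z) = 0 :=
    commutator_mul_eq_zero_of_commute ((Set.mem_center_iff.1 hdz).comm b).symm
      ((Set.mem_center_iff.1 hadz).comm b).symm
  have hsq : d * z * (d * z) = 0 := by
    have hcz : c * z ∈ Set.center R := Set.mul_mem_center hc hz
    calc d * z * (d * z) = (a * b - b * a) * (c * z * (d * z)) := by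
          simp only [hd_def, mul_assoc]
      _ = (a * b - b * a) * (d * z) * (c * z) := by
          rw [((Set.mem_center_iff.1 hcz).comm _).eq, mul_assoc _ (d * z)]
      _ = 0 := by rw [hcomm, zero_mul]
  exact hdz0 (hJ.eq_zero_of_commute_of_mul_self_eq_zero (mul_mem_of_mem_center hdJ hz)
    (fun x _ ↦ (Set.mem_center_iff.1 hdz).comm x) hsq)

end IsCentrallyEssential

theorem stmt3_general {R : Type*} [Ring R] (hR : IsCentrallyEssential R)
    (J : NonUnitalSubalgebra (Subring.center R) R)
    (hJ : IsSemiprimeSubring J.toNonUnitalSubring) :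
    (∀ a ∈ J, IsNilpotent a → a = 0) ∧ (∀ a ∈ J, ∀ b ∈ J, a * b = b * a) :=
  ⟨fun _ ha ↦ eq_zero_of_isNilpotent_of_mem_subsemigroup (S := J.toSubsemigroup)
      (fun _ hx ↦ hR.eq_zero_of_mul_self_eq_zero hJ hx) ha,
    fun _ ha _ hb ↦ hR.mul_comm_of_mem hJ ha hb⟩

/-- Let `R` be a centrally essential ring and let `J` be a right ideal of `R` which is
semiprime as a ring. Then `J` is a reduced and commutative right ideal. -/
theorem stmt3 (R : Type*) [Ring R] (hR : IsCentrallyEssential R)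
    (J : AddSubgroup R) (hJright : ∀ x ∈ J, ∀ r : R, x * r ∈ J)
    (hJsemiprime : ∀ N : AddSubgroup R, (N : Set R) ⊆ (J : Set R) →
      (∀ x ∈ J, ∀ n ∈ N, x * n ∈ N) → (∀ x ∈ J, ∀ n ∈ N, n * x ∈ N) →
      (∀ m ∈ N, ∀ n ∈ N, m * n = 0) → N = ⊥) :
    (∀ a ∈ J, IsNilpotent a → a = 0) ∧ (∀ a ∈ J, ∀ b ∈ J, a * b = b * a) :=
  stmt3_general hR (nonUnitalSubalgebraOfRightIdeal J hJright) hJsemiprime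
end

section
/- Let R be a unital ring in which every idempotent is central, and let I be a minimal non-nilpotent right ideal of R. Then I = eR for a central idempotent e (so I is a two-sided ideal), and R is a centrally essential ring if and only if both the ring I (with operations inherited from R) and the quotient ring R/I are centrally essential rings. -/
/-- A subset `S` of a ring, regarded as a (not necessarily unital) ring with the inherited
operations, is centrally essential if it is commutative or for every element of `S` that is
not central in `S` there exist nonzero elements `x, y` of the center of `S` with `a * x = y`. -/
def SetIsCentrallyEssential (R : Type*) [Ring R] (S : Set R) : Prop :=
  (∀ x ∈ S, ∀ y ∈ S, x * y = y * x) ∨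
    ∀ a ∈ S, (¬ ∀ x ∈ S, a * x = x * a) →
      ∃ x ∈ S, ∃ y ∈ S, (∀ z ∈ S, x * z = z * x) ∧ (∀ z ∈ S, y * z = z * y) ∧
        x ≠ 0 ∧ y ≠ 0 ∧ a * x = y

/-!
By Schur's lemma, left multiplication by an element `x` of a minimal right ideal `I` with `x I ≠ 0`
is a bijection of `I`. The `e ∈ I` with `x e = x` then satisfies `x (e z - z) = 0`, hence `e z = z`,
for all `z ∈ I`, so that `I = eR` with `e` idempotent. If `e` is central, then `R` is the direct
product of `eR ≅ I` and `(1 - e)R ≅ R/I`, and central essentiality can be tested on each factor.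
-/

section Brauer

variable {R : Type*} [Ring R]

theorem exists_isIdempotentElem_eq_range_mul_left {I : Submodule Rᵐᵒᵖ R} (hI : IsAtom I)
    (hsq : ∃ x ∈ I, ∃ y ∈ I, x * y ≠ 0) :
    ∃ e ∈ I, IsIdempotentElem e ∧ (I : Set R) = Set.range (fun r : R => e * r) := by
  obtain ⟨x, hx, y, hy, hxy⟩ := hsq
  have : IsSimpleModule Rᵐᵒᵖ I := isSimpleModule_iff_isAtom.2 hI
  let mulX : I →ₗ[Rᵐᵒᵖ] I :=
    (DistribSMul.toLinearMap Rᵐᵒᵖ R x).restrict fun z _ => I.smul_mem (MulOpposite.op z) hx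
  have hmulX : Function.Bijective mulX := LinearMap.bijective_of_ne_zero fun h =>
    hxy (congr_arg Subtype.val (LinearMap.congr_fun h ⟨y, hy⟩))
  obtain ⟨⟨e, he⟩, hxe⟩ := hmulX.surjective ⟨x, hx⟩
  have hxe : x * e = x := congr_arg Subtype.val hxe
  have heI (r : R) : e * r ∈ I := I.smul_mem (MulOpposite.op r) he
  have e_mul {z : R} (hz : z ∈ I) : e * z = z := by
    have : mulX ⟨e * z, heI z⟩ = mulX ⟨z, hz⟩ :=
      Subtype.ext (show x * (e * z) = x * z by rw [← mul_assoc, hxe])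
    exact congr_arg Subtype.val (hmulX.injective this)
  refine ⟨e, he, e_mul he, Set.Subset.antisymm (fun z hz => ⟨z, e_mul hz⟩) ?_⟩
  rintro _ ⟨r, rfl⟩
  exact heI r

/-- An additive subgroup stable under right multiplication, as a right ideal; right ideals of `R`
are encoded as submodules of `R` over the opposite ring. -/
def rightIdealOfMulMem (I : AddSubgroup R) (hI : ∀ x ∈ I, ∀ r : R, x * r ∈ I) :
    Submodule Rᵐᵒᵖ R where
  __ := I
  smul_mem' r x hx := hI x hx r.unop

theorem isAtom_rightIdealOfMulMem {I : AddSubgroup R} (hI : ∀ x ∈ I, ∀ r : R, x * r ∈ I)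
    (hIne : I ≠ ⊥)
    (hImin : ∀ I' : AddSubgroup R, (∀ x ∈ I', ∀ r : R, x * r ∈ I') → I' ≤ I → I' = ⊥ ∨ I' = I) :
    IsAtom (rightIdealOfMulMem I hI) := by
  refine ⟨fun h => hIne (congr_arg Submodule.toAddSubgroup h), fun J hJ => ?_⟩
  have hJright : ∀ x ∈ J.toAddSubgroup, ∀ r : R, x * r ∈ J.toAddSubgroup :=
    fun x hx r => J.smul_mem (MulOpposite.op r) hx
  rcases hImin J.toAddSubgroup hJright hJ.le with h | h
  · exact Submodule.toAddSubgroup_injective h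
  · exact absurd (Submodule.toAddSubgroup_injective h) hJ.ne

end Brauer

section Transfer

theorem isCentrallyEssential_congr {A B : Type*} [Ring A] [Ring B] (φ : A ≃+* B) :
    IsCentrallyEssential A ↔ IsCentrallyEssential B := by
  simp only [IsCentrallyEssential, φ.surjective.forall, φ.surjective.exists, ← map_mul,
    MulEquivClass.apply_mem_center_iff, ne_eq, map_eq_zero_iff φ φ.injective]

theorem isCentrallyEssential_pi_iff {ι : Type*} {A : ι → Type*} [∀ i, Ring (A i)] :
    IsCentrallyEssential (∀ i, A i) ↔ ∀ i, IsCentrallyEssential (A i) := by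
  classical
  have single_mem_center {i : ι} {c : A i} (hc : c ∈ Set.center (A i)) :
      Pi.single i c ∈ Set.center (∀ i, A i) := by
    rw [Set.center_pi]
    intro j _
    obtain rfl | hij := eq_or_ne j i
    · rwa [Pi.single_eq_same]
    · rw [Pi.single_eq_of_ne hij]
      exact Set.zero_mem_center
  constructor
  · intro h i a ha
    obtain ⟨c, hc, hac, hac0⟩ := h (Pi.single i a) (by rwa [ne_eq, Pi.single_eq_zero_iff])
    rw [← Pi.single_mul_left] at hac hac0
    rw [Set.center_pi] at hc hac
    exact ⟨c i, hc i trivial, by simpa using hac i trivial, mt Pi.single_eq_zero_iff.2 hac0⟩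
  · intro h a ha
    obtain ⟨i, hi⟩ := Function.ne_iff.1 ha
    obtain ⟨c, hc, hac, hac0⟩ := h i (a i) hi
    refine ⟨Pi.single i c, single_mem_center hc, ?_⟩
    rw [← Pi.single_mul_right]
    exact ⟨single_mem_center hac, mt Pi.single_eq_zero_iff.1 hac0⟩

theorem setIsCentrallyEssential_range_iff {A R : Type*} [Ring A] [Ring R] {f : A →ₙ+* R}
    (hf : Function.Injective f) :
    SetIsCentrallyEssential R (Set.range f) ↔ IsCentrallyEssential A := by
  have commutes_iff (a : A) : (∀ z ∈ Set.range f, f a * z = z * f a) ↔ a ∈ Set.center A := by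
    simp only [Set.forall_mem_range, ← map_mul, hf.eq_iff, Semigroup.mem_center_iff, eq_comm]
  constructor
  · intro h a ha
    by_cases hac : a ∈ Set.center A
    · exact ⟨1, Set.one_mem_center, by rwa [mul_one], by rwa [mul_one]⟩
    rw [← commutes_iff] at hac
    rcases h with hcomm | h
    · exact absurd (hcomm (f a) ⟨a, rfl⟩) hac
    obtain ⟨_, ⟨c, rfl⟩, _, ⟨b, rfl⟩, hc, hb, -, hb0, hacb⟩ := h (f a) ⟨a, rfl⟩ hac
    rw [commutes_iff] at hc hb
    obtain rfl : a * c = b := hf (by rw [map_mul, hacb])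
    exact ⟨c, hc, hb, ne_of_apply_ne f (by rwa [map_zero])⟩
  · refine fun h => Or.inr ?_
    rintro _ ⟨a, rfl⟩ hac
    rw [commutes_iff] at hac
    obtain ⟨c, hc, hac, hac0⟩ := h a (by rintro rfl; exact hac Set.zero_mem_center)
    have hc0 : c ≠ 0 := right_ne_zero_of_mul hac0
    exact ⟨f c, ⟨c, rfl⟩, f (a * c), ⟨a * c, rfl⟩, (commutes_iff c).2 hc, (commutes_iff _).2 hac,
      (map_ne_zero_iff f hf).2 hc0, (map_ne_zero_iff f hf).2 hac0, (map_mul f a c).symm⟩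

theorem isCentrallyEssential_iff_of_surjective {R B : Type*} [Ring R] [Ring B] {g : R →+* B}
    (hg : Function.Surjective g) :
    IsCentrallyEssential B ↔
      ∀ a : R, a ∉ RingHom.ker g → ∃ c : R, (∀ x : R, c * x - x * c ∈ RingHom.ker g) ∧
        (∀ x : R, a * c * x - x * (a * c) ∈ RingHom.ker g) ∧ a * c ∉ RingHom.ker g := by
  have commutes_iff (d : R) : (∀ x, d * x - x * d ∈ RingHom.ker g) ↔ g d ∈ Set.center B := by
    simp only [RingHom.mem_ker, map_sub, map_mul, sub_eq_zero, Semigroup.mem_center_iff,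
      hg.forall, eq_comm (a := g d * _)]
  simp only [commutes_iff]
  simp only [IsCentrallyEssential, hg.forall, hg.exists, ← map_mul, ne_eq, RingHom.mem_ker]

end Transfer

section CentralIdempotent

variable {R : Type*} [Ring R] {e : R}

/-- The inclusion of the corner ring `eRe` into `R`; it is not unital, since the identity of `eRe`
is `e`. -/
def cornerSubtype (he : IsIdempotentElem e) : he.Corner →ₙ+* R where
  toFun := Subtype.val
  map_mul' _ _ := rfl
  map_zero' := rfl
  map_add' _ _ := rfl


theorem range_cornerSubtype (he : IsIdempotentElem e) (hec : e ∈ Set.center R) :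
    Set.range (cornerSubtype he) = Set.range (fun r : R => e * r) :=
  Subtype.range_coe.trans <|
    Set.ext fun _ => Subsemigroup.mem_corner_iff_mem_range_mul_left he hec

/-- The Peirce decomposition `R ≅ eR × (1 - e)R` along a central idempotent `e`, with the two
factors indexed by `Fin 2`. -/
def peirceEquiv (he : IsIdempotentElem e) (hec : e ∈ Set.center R) :
    R ≃+* ∀ i, ((CompleteOrthogonalIdempotents.of_isIdempotentElem he).idem i).Corner :=
  (CompleteOrthogonalIdempotents.of_isIdempotentElem he).ringEquivOfIsMulCentral <|
    Fin.forall_fin_two.2 ⟨hec, (Subring.center R).sub_mem (Subring.center R).one_mem hec⟩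

/-- The projection of `R` onto its direct factor `(1 - e)R`, for a central idempotent `e`. -/
def complCornerProj (he : IsIdempotentElem e) (hec : e ∈ Set.center R) :
    R →+* he.one_sub.Corner :=
  (Pi.evalRingHom
    (fun i => ((CompleteOrthogonalIdempotents.of_isIdempotentElem he).idem i).Corner) 1).comp
    (peirceEquiv he hec).toRingHom

theorem complCornerProj_surjective (he : IsIdempotentElem e) (hec : e ∈ Set.center R) :
    Function.Surjective (complCornerProj he hec) :=
  (Function.surjective_eval (1 : Fin 2)).comp (peirceEquiv he hec).surjective

theorem mem_ker_complCornerProj (he : IsIdempotentElem e) (hec : e ∈ Set.center R) {r : R} :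
    r ∈ RingHom.ker (complCornerProj he hec) ↔ r ∈ Set.range (fun r : R => e * r) := by
  have hproj : (1 - e) * r * (1 - e) = r - e * r := by
    rw [mul_assoc, mul_one_sub, ← (hec.comm r).eq, one_sub_mul, mul_sub, ← mul_assoc e e, he.eq,
      sub_self, sub_zero]
  calc r ∈ RingHom.ker (complCornerProj he hec)
      ↔ (1 - e) * r * (1 - e) = 0 := Subtype.ext_iff
    _ ↔ e * r = r := by rw [hproj, sub_eq_zero, eq_comm]
    _ ↔ r ∈ Set.range (fun r : R => e * r) := by
      rw [← Subsemigroup.mem_corner_iff_mul_left he hec,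
        Subsemigroup.mem_corner_iff_mem_range_mul_left he hec]

theorem isCentrallyEssential_iff_corner (he : IsIdempotentElem e) (hec : e ∈ Set.center R) :
    IsCentrallyEssential R ↔
      IsCentrallyEssential he.Corner ∧ IsCentrallyEssential he.one_sub.Corner := by
  rw [isCentrallyEssential_congr (peirceEquiv he hec), isCentrallyEssential_pi_iff,
    Fin.forall_fin_two]
  rfl

theorem isCentrallyEssential_iff_of_eq_range_mul_left (he : IsIdempotentElem e)
    (hec : e ∈ Set.center R) {I : AddSubgroup R}
    (hI : (I : Set R) = Set.range (fun r : R => e * r)) :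
    IsCentrallyEssential R ↔
      (SetIsCentrallyEssential R (I : Set R) ∧
        ∀ a : R, a ∉ I → ∃ c : R, (∀ x : R, c * x - x * c ∈ I) ∧
          (∀ x : R, a * c * x - x * (a * c) ∈ I) ∧ a * c ∉ I) := by
  have hker (r : R) : r ∈ RingHom.ker (complCornerProj he hec) ↔ r ∈ I := by
    rw [mem_ker_complCornerProj, ← hI, SetLike.mem_coe]
  rw [isCentrallyEssential_iff_corner he hec, hI, ← range_cornerSubtype he hec,
    setIsCentrallyEssential_range_iff Subtype.val_injective,
    isCentrallyEssential_iff_of_surjective (complCornerProj_surjective he hec)]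
  simp only [hker]

end CentralIdempotent

theorem stmt6_general (R : Type*) [Ring R] (I : AddSubgroup R)
    (hidem : ∀ e ∈ I, e * e = e → e ∈ Set.center R)
    (hIright : ∀ x ∈ I, ∀ r : R, x * r ∈ I)
    (hImin : ∀ I' : AddSubgroup R, (∀ x ∈ I', ∀ r : R, x * r ∈ I') → I' ≤ I →
      I' = ⊥ ∨ I' = I)
    (hsq : ∃ x ∈ I, ∃ y ∈ I, x * y ≠ 0) :
    (∃ e : R, e ∈ Set.center R ∧ e * e = e ∧ (I : Set R) = Set.range (fun r : R => e * r)) ∧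
    (∀ x ∈ I, ∀ r : R, r * x ∈ I) ∧
    (IsCentrallyEssential R ↔
      (SetIsCentrallyEssential R (I : Set R) ∧
        ∀ a : R, a ∉ I → ∃ c : R, (∀ x : R, c * x - x * c ∈ I) ∧
          (∀ x : R, a * c * x - x * (a * c) ∈ I) ∧ a * c ∉ I)) := by
  have hIne : I ≠ ⊥ := by
    rintro rfl
    obtain ⟨x, hx, y, -, hxy⟩ := hsq
    exact hxy (by rw [AddSubgroup.mem_bot.1 hx, zero_mul])
  obtain ⟨e, heI, he, hI⟩ := exists_isIdempotentElem_eq_range_mul_left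
    (isAtom_rightIdealOfMulMem hIright hIne hImin) hsq
  have hec : e ∈ Set.center R := hidem e heI he
  refine ⟨⟨e, hec, he, hI⟩, fun x hx r => ?_,
    isCentrallyEssential_iff_of_eq_range_mul_left he hec hI⟩
  obtain ⟨s, rfl⟩ : x ∈ Set.range (fun r : R => e * r) := hI ▸ hx
  rw [← hec.left_comm]
  exact hIright e heI (r * s)

/-- Let `R` be a unital ring in which every idempotent is central, and let `I` be a minimal
non-nilpotent right ideal of `R`. Then `I = eR` for a central idempotent `e` (so `I` is a
two-sided ideal), and `R` is centrally essential iff both the ring `I` and the quotient ring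
`R/I` (expressed via representatives) are centrally essential rings. -/
theorem stmt6 (R : Type*) [Ring R] (hidem : ∀ e : R, e * e = e → e ∈ Set.center R)
    (I : AddSubgroup R) (hIright : ∀ x ∈ I, ∀ r : R, x * r ∈ I)
    (hIne : I ≠ ⊥)
    (hImin : ∀ I' : AddSubgroup R, (∀ x ∈ I', ∀ r : R, x * r ∈ I') → I' ≤ I →
      I' = ⊥ ∨ I' = I)
    (hInonnilpotent : ∀ n : ℕ, 0 < n →
      ∃ f : Fin n → R, (∀ i, f i ∈ I) ∧ (List.ofFn f).prod ≠ 0) :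
    (∃ e : R, e ∈ Set.center R ∧ e * e = e ∧ (I : Set R) = Set.range (fun r : R => e * r)) ∧
    (∀ x ∈ I, ∀ r : R, r * x ∈ I) ∧
    (IsCentrallyEssential R ↔
      (SetIsCentrallyEssential R (I : Set R) ∧
        ∀ a : R, a ∉ I → ∃ c : R, (∀ x : R, c * x - x * c ∈ I) ∧
          (∀ x : R, a * c * x - x * (a * c) ∈ I) ∧ a * c ∉ I)) := by
  obtain ⟨f, hfI, hf⟩ := hInonnilpotent 2 two_pos
  exact stmt6_general R I (fun e _ => hidem e) hIright hImin
    ⟨f 0, hfI 0, f 1, hfI 1, by simpa using hf⟩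
end

section
/- The group ring ℤ₉Q₈ of the quaternion group Q₈ of order 8 over the ring ℤ/9ℤ is not a centrally essential ring. -/
/-!
If `x` anticommutes with `v`, it anticommutes with every central multiple `v * c`; so if `v * c` is
itself central, then `2 * x * (v * c) = 0`. When `2` and `x` can be cancelled, a centrally essential
ring therefore contains no `v ≠ 0` anticommuting with `x`. Such a `v` is the commutator `⁅x, y⁆`
whenever `x ^ 2`, but not `x`, commutes with `y`, as happens for the generators of `Q₈`.
-/

section Ring

variable {R : Type*} [Ring R] {x y v : R}

theorem eq_zero_of_commute_of_semiconjBy_neg (two : IsLeftRegular (2 : R)) (hx : IsLeftRegular x)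
    (hcomm : Commute x v) (hanti : SemiconjBy x v (-v)) : v = 0 := by
  have neg_eq : x * v = -(x * v) := by
    calc x * v = -(v * x) := by rw [hanti.eq, neg_mul]
      _ = -(x * v) := by rw [hcomm.eq]
  have two_mul_eq : 2 * (x * v) = 0 := by
    rw [two_mul, ← eq_neg_iff_add_eq_zero, ← neg_eq]
  rw [isLeftRegular_iff_right_eq_zero_of_mul] at two hx
  exact hx v (two (x * v) two_mul_eq)

theorem IsCentrallyEssential.eq_zero_of_semiconjBy_neg (hR : IsCentrallyEssential R)
    (two : IsLeftRegular (2 : R)) (hx : IsLeftRegular x) (hanti : SemiconjBy x v (-v)) :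
    v = 0 := by
  by_contra hv
  obtain ⟨c, hc, hvc, hne⟩ := hR v hv
  have hanti_mul : SemiconjBy x (v * c) (-(v * c)) :=
    neg_mul v c ▸ hanti.mul_right (hc.comm x).symm
  exact hne (eq_zero_of_commute_of_semiconjBy_neg two hx (hvc.comm x).symm hanti_mul)

theorem semiconjBy_lie_neg_of_commute_sq (h : Commute (x ^ 2) y) :
    SemiconjBy x ⁅x, y⁆ (-⁅x, y⁆) := by
  have hsq : x * (x * y) = y * x * x := by rw [← mul_assoc, ← sq, h.eq, sq, mul_assoc]
  rw [SemiconjBy, Ring.lie_def, neg_sub, mul_sub, sub_mul, hsq, mul_assoc x y x]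

theorem IsCentrallyEssential.commute_of_commute_sq (hR : IsCentrallyEssential R)
    (two : IsLeftRegular (2 : R)) (hx : IsLeftRegular x) (h : Commute (x ^ 2) y) :
    Commute x y :=
  commute_iff_lie_eq.2 (hR.eq_zero_of_semiconjBy_neg two hx (semiconjBy_lie_neg_of_commute_sq h))

end Ring

theorem isLeftRegular_single {R M : Type*} [Semiring R] [Mul M] {r : R} {m : M}
    (hr : IsLeftRegular r) (hm : IsLeftRegular m) :
    IsLeftRegular (MonoidAlgebra.single m r) := by
  intro f g hfg
  ext n
  have coeff_mul (p : MonoidAlgebra R M) :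
      (MonoidAlgebra.single m r * p).coeff (m * n) = r * p.coeff n :=
    p.coeff_single_mul_eq_mul_coeff n fun _ _ ↦ hm.eq_iff
  exact hr (by simpa only [coeff_mul] using congr(($hfg).coeff (m * n)))

theorem stmt16_general {R M : Type*} [Ring R] [Nontrivial R] [Monoid M]
    (two : IsLeftRegular (2 : R)) {x y : M} (hx : IsLeftRegular x)
    (hsq : Commute (x ^ 2) y) (hxy : ¬ Commute x y) :
    ¬ IsCentrallyEssential (MonoidAlgebra R M) := by
  intro hR
  let of := MonoidAlgebra.of R M
  have two' : IsLeftRegular (2 : MonoidAlgebra R M) :=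
    isLeftRegular_single two isRegular_one.left
  have hx' : IsLeftRegular (of x) := isLeftRegular_single isRegular_one.left hx
  have hsq' : Commute (of x ^ 2) (of y) := map_pow of x 2 ▸ hsq.map of
  exact hxy ((hR.commute_of_commute_sq two' hx' hsq').of_map MonoidAlgebra.of_injective)

/-- The group ring `ℤ₉Q₈` of the quaternion group of order `8` over `ℤ/9ℤ` is not a
centrally essential ring. -/
theorem stmt16 :
    ¬ IsCentrallyEssential (MonoidAlgebra (ZMod 9) (QuaternionGroup 2)) := by
  have : Nontrivial (ZMod 9) := ZMod.nontrivial_iff.2 (by decide)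
  have two : IsLeftRegular (2 : ZMod 9) := isLeftRegular_of_mul_eq_one (b := 5) rfl
  have hsq : Commute (QuaternionGroup.xa 0 ^ 2) (QuaternionGroup.a 1 : QuaternionGroup 2) := rfl
  have hxa : ¬ Commute (QuaternionGroup.xa 0) (QuaternionGroup.a 1 : QuaternionGroup 2) := by
    unfold Commute SemiconjBy
    decide
  exact stmt16_general two (IsLeftRegular.all _) hsq hxa
end

section
/- The group algebra 𝔽₂Q₈ of the quaternion group Q₈ of order 8 over the field 𝔽₂ = ℤ/2ℤ is a non-commutative centrally essential ring. -/
/-!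
Let `G` be a group of nilpotency class at most two whose commutator subgroup `G'` is a finite
`p`-group, and let `R` be a commutative ring of characteristic `p`. The elements `c - 1` with
`c ∈ G'` are central and nilpotent in `R[G]`, and there are finitely many of them, so every nonzero
`a` has a nonzero multiple `a * z`, with `z` a product of powers of these elements, that all of
them annihilate. The coefficients of `a * z` are then constant on the cosets of `G'`. Since
`g⁻¹ * h` and `h * g⁻¹` always lie in the same coset, `a * z` commutes with every `g ∈ G`.
-/

open MonoidAlgebra QuaternionGroup
open scoped commutatorElement

theorem exists_mul_pow_ne_zero_and_mul_eq_zero {M : Type*} [MonoidWithZero M] {a n : M}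
    (ha : a ≠ 0) (hn : IsNilpotent n) : ∃ k, a * n ^ k ≠ 0 ∧ a * n ^ k * n = 0 := by
  by_contra! h
  have hne (k : ℕ) : a * n ^ k ≠ 0 := by
    induction k with
    | zero => simpa using ha
    | succ k ih => simpa only [pow_succ, mul_assoc] using h k ih
  obtain ⟨k, hk⟩ := hn
  exact hne k (by rw [hk, mul_zero])

theorem exists_mem_center_mul_ne_zero_and_forall_mul_eq_zero {M : Type*} [MonoidWithZero M]
    {s : Set M} (hs : s.Finite) (hcenter : s ⊆ Set.center M) (hnil : ∀ n ∈ s, IsNilpotent n)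
    {a : M} (ha : a ≠ 0) :
    ∃ z ∈ Set.center M, a * z ≠ 0 ∧ ∀ n ∈ s, a * z * n = 0 := by
  induction s, hs using Set.Finite.induction_on with
  | empty => exact ⟨1, Set.one_mem_center, by simpa using ha, by simp⟩
  | @insert n s _ _ ih =>
    rw [Set.insert_subset_iff] at hcenter
    rw [Set.forall_mem_insert] at hnil
    obtain ⟨z, hz, haz, hzs⟩ := ih hcenter.2 hnil.2
    obtain ⟨k, hk, hkn⟩ := exists_mul_pow_ne_zero_and_mul_eq_zero haz hnil.1
    have hnk : n ^ k ∈ Set.center M := (Submonoid.center M).pow_mem hcenter.1 k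
    refine ⟨z * n ^ k, Set.mul_mem_center hz hnk, by rwa [← mul_assoc], ?_⟩
    rw [Set.forall_mem_insert, ← mul_assoc]
    refine ⟨hkn, fun m hm ↦ ?_⟩
    rw [mul_assoc, ← Semigroup.mem_center_iff.mp hnk m, ← mul_assoc, hzs m hm, zero_mul]

theorem isNilpotent_sub_one_of_pow_char_pow_eq_one {A : Type*} [Ring A] {p : ℕ} [Fact p.Prime]
    [CharP A p] {u : A} {k : ℕ} (hu : u ^ p ^ k = 1) : IsNilpotent (u - 1) :=
  ⟨p ^ k, by rw [sub_pow_char_pow_of_commute _ _ (Commute.one_right u), hu, one_pow, sub_self]⟩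

theorem monoidAlgebra_of_mem_center {R M : Type*} [CommSemiring R] [Monoid M] {m : M}
    (hm : m ∈ Set.center M) : of R M m ∈ Set.center (MonoidAlgebra R M) :=
  Semigroup.mem_center_iff.mpr fun x ↦
    (of_commute (fun n ↦ (Semigroup.mem_center_iff.mp hm n).symm) x).symm

section GroupAlgebra

variable {R G : Type*} [Group G]

theorem monoidAlgebra_mem_center_of_forall_mul_of_eq_self [CommSemiring R] {x : MonoidAlgebra R G}
    (hx : ∀ c ∈ commutator G, x * of R G c = x) : x ∈ Set.center (MonoidAlgebra R G) := by
  have hcoeff {c : G} (hc : c ∈ commutator G) (g : G) : x.coeff (g * c) = x.coeff g := by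
    nth_rw 1 [← hx c hc]
    simp
  refine Semigroup.mem_center_iff.mpr fun y ↦ ?_
  induction y using induction_linear with
  | zero => simp
  | add y₁ y₂ h₁ h₂ => rw [add_mul, mul_add, h₁, h₂]
  | single g r =>
    ext h
    have hswap : g⁻¹ * h = h * g⁻¹ * ⁅g, h⁻¹⁆ := by group
    rw [coeff_single_mul_apply, coeff_mul_single_apply, mul_comm, hswap,
      hcoeff (Subgroup.commutator_mem_commutator trivial trivial)]

theorem isCentrallyEssential_monoidAlgebra [CommRing R] {p : ℕ} [Fact p.Prime] [CharP R p]
    [Finite (commutator G)] (hp : IsPGroup p (commutator G))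
    (hG : commutator G ≤ Subgroup.center G) : IsCentrallyEssential (MonoidAlgebra R G) := by
  have : CharP (MonoidAlgebra R G) p := charP_of_injective_algebraMap' R p
  intro a ha
  let s : Set (MonoidAlgebra R G) := (fun c ↦ of R G c - 1) '' (commutator G : Set G)
  have hs : s.Finite := (Set.toFinite (commutator G : Set G)).image _
  have hcenter : s ⊆ Set.center (MonoidAlgebra R G) := by
    rintro _ ⟨c, hc, rfl⟩
    exact (Subring.center _).sub_mem (monoidAlgebra_of_mem_center (hG hc)) (one_mem _)
  have hnil : ∀ n ∈ s, IsNilpotent n := by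
    rintro _ ⟨c, hc, rfl⟩
    obtain ⟨k, hk⟩ := isPGroup_iff_pow_pow_eq_one.mp hp ⟨c, hc⟩
    have hck : c ^ p ^ k = 1 := congrArg Subtype.val hk
    exact isNilpotent_sub_one_of_pow_char_pow_eq_one (p := p) (k := k)
      (by rw [← map_pow, hck, map_one])
  obtain ⟨z, hz, haz, hzs⟩ :=
    exists_mem_center_mul_ne_zero_and_forall_mul_eq_zero hs hcenter hnil ha
  refine ⟨z, hz, monoidAlgebra_mem_center_of_forall_mul_of_eq_self fun c hc ↦ ?_, haz⟩
  have hzc : a * z * (of R G c - 1) = 0 := hzs _ ⟨c, hc, rfl⟩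
  rwa [mul_sub, mul_one, sub_eq_zero] at hzc

end GroupAlgebra

theorem commutator_quaternionGroup_two_le_center :
    commutator (QuaternionGroup 2) ≤ Subgroup.center (QuaternionGroup 2) := by
  have hcenter : (a 2 : QuaternionGroup 2) ∈ Subgroup.center (QuaternionGroup 2) :=
    Subgroup.mem_center_iff.mpr (by decide)
  have hcomm : ∀ g h : QuaternionGroup 2, ⁅g, h⁆ = 1 ∨ ⁅g, h⁆ = a 2 := by decide
  rw [commutator_def, Subgroup.commutator_le]
  intro g _ h _
  rcases hcomm g h with hgh | hgh
  · exact hgh ▸ one_mem _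
  · exact hgh ▸ hcenter

theorem isPGroup_two_quaternionGroup_two : IsPGroup 2 (QuaternionGroup 2) :=
  IsPGroup.of_card (n := 3) (by rw [Nat.card_eq_fintype_card, QuaternionGroup.card]; norm_num)

theorem stmt19_general {R G : Type*} [CommRing R] [Group G] {p : ℕ} [Fact p.Prime] [CharP R p]
    [Finite (commutator G)] (hp : IsPGroup p (commutator G))
    (hG : commutator G ≤ Subgroup.center G) (hne : ∃ g h : G, g * h ≠ h * g) :
    IsCentrallyEssential (MonoidAlgebra R G) ∧
      ∃ x y : MonoidAlgebra R G, x * y ≠ y * x := by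
  have : Nontrivial R := CharP.nontrivial_of_char_ne_one (Fact.out : p.Prime).ne_one
  obtain ⟨g, h, hgh⟩ := hne
  refine ⟨isCentrallyEssential_monoidAlgebra hp hG, of R G g, of R G h, ?_⟩
  rw [← map_mul, ← map_mul]
  exact of_injective.ne hgh

/-- The group algebra `𝔽₂Q₈` of the quaternion group of order `8` over the field `ℤ/2ℤ` is a
non-commutative centrally essential ring. -/
theorem stmt19 :
    IsCentrallyEssential (MonoidAlgebra (ZMod 2) (QuaternionGroup 2)) ∧
      ∃ x y : MonoidAlgebra (ZMod 2) (QuaternionGroup 2), x * y ≠ y * x :=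
  stmt19_general (isPGroup_two_quaternionGroup_two.to_subgroup _)
    commutator_quaternionGroup_two_le_center ⟨a 1, xa 0, by decide⟩
end
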